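/- Let (X, H) be a hypothesis class and fix ε with 0 < ε < 1/2. The following are equivalent: (1) the Littlestone dimension of H is finite; (2) the Threshold dimension of H is finite; (3) the ε-virtual Littlestone dimension of H is finite; (4) the ε-virtual Threshold dimension of H is finite; (5) the ε-approximate Littlestone dimension of H is finite. -/

import Mathlib

open scoped Classical

/-- `h` realizes the branch `y` in the binary tree with node labels given by `t`
(the node reached by the bit string `s` is labeled `t s`). -/
def Realizes {X : Type*} (t : List Bool → X) (h : X → Bool) (y : List Bool) : Prop :=
  ∀ i : Fin y.length, h (t (y.take i)) = y.get i

/-- `H` shatters some complete binary mistake tree of depth `d`. -/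
def Shatters {X : Type*} (H : Set (X → Bool)) (d : ℕ) : Prop :=
  ∃ t : List Bool → X, ∀ y : List Bool, y.length = d → ∃ h ∈ H, Realizes t h y

/-- Littlestone dimension: supremum of depths of shattered mistake trees
(`⊥` for the empty class, `⊤` if unbounded). -/
noncomputable def Ldim {X : Type*} (H : Set (X → Bool)) : WithBot ℕ∞ :=
  sSup {d : WithBot ℕ∞ | ∃ n : ℕ, Shatters H n ∧ d = ((n : ℕ∞) : WithBot ℕ∞)}

/-- A finite set `A` of hypotheses is ε-good: every point `x` splits it ε-unevenly. -/
def EpsGoodH {X : Type*} (ε : ℝ) (A : Finset (X → Bool)) : Prop :=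
  ∀ x : X, ((A.filter fun h => h x = true).card : ℝ) < ε * A.card ∨
           ((A.filter fun h => h x = false).card : ℝ) < ε * A.card

/-- A finite set `B ⊆ X` is ε-good w.r.t. the class `H`. -/
def EpsGoodX {X : Type*} (H : Set (X → Bool)) (ε : ℝ) (B : Finset X) : Prop :=
  ∀ h ∈ H, ((B.filter fun b => h b = true).card : ℝ) < ε * B.card ∨
           ((B.filter fun b => h b = false).card : ℝ) < ε * B.card

/-- The majority opinion `t(h,B)`: `true` iff `h` is `0` on `< ε|B|` of `B`. -/
noncomputable def tb {X : Type*} (ε : ℝ) (h : X → Bool) (B : Finset X) : Bool :=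
  if ((B.filter fun b => h b = false).card : ℝ) < ε * B.card then true else false

/-- A finite set `A` of hypotheses is ε-excellent w.r.t. `H`: every ε-good
`B ⊆ X` splits `A` ε-unevenly according to the majority opinions `t(·,B)`. -/
def EpsExcellent {X : Type*} (H : Set (X → Bool)) (ε : ℝ) (A : Finset (X → Bool)) : Prop :=
  ∀ B : Finset X, B.Nonempty → EpsGoodX H ε B →
    ((A.filter fun h => tb ε h B = true).card : ℝ) < ε * A.card ∨
    ((A.filter fun h => tb ε h B = false).card : ℝ) < ε * A.card

/-- `H` has a threshold (half-graph) configuration of size `k`. -/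
def ThresholdAt {X : Type*} (H : Set (X → Bool)) (k : ℕ) : Prop :=
  ∃ (x : Fin k → X) (h : Fin k → (X → Bool)),
    (∀ j, h j ∈ H) ∧ ∀ i j, (h j (x i) = true ↔ i < j)

/-- `H` shatters a complete binary tree of depth `ℓ` whose nodes are labeled by
ε-virtual elements (finite nonempty ε-good subsets of `X`), realization via `t(·,·)`. -/
def VirtShatters {X : Type*} (H : Set (X → Bool)) (ε : ℝ) (ℓ : ℕ) : Prop :=
  ∃ t : List Bool → Finset X,
    (∀ s : List Bool, s.length < ℓ → (t s).Nonempty ∧ EpsGoodX H ε (t s)) ∧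
    ∀ y : List Bool, y.length = ℓ → ∃ h ∈ H,
      ∀ i : Fin y.length, tb ε h (t (y.take i)) = y.get i

/-- `H` has an ε-virtual threshold configuration of size `k`: distinct virtual elements
`B_1,…,B_k` and distinct `h_1,…,h_k ∈ H` with `t(h_j, B_i) = 1` iff `i < j`. -/
def VirtThresholdAt {X : Type*} (H : Set (X → Bool)) (ε : ℝ) (k : ℕ) : Prop :=
  ∃ (B : Fin k → Finset X) (h : Fin k → (X → Bool)),
    Function.Injective B ∧ Function.Injective h ∧
    (∀ i, (B i).Nonempty ∧ EpsGoodX H ε (B i)) ∧ (∀ j, h j ∈ H) ∧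
    ∀ i j, (tb ε (h j) (B i) = true ↔ i < j)

/-- `H` ε-approximately shatters a complete `X`-labeled binary tree of depth `ℓ`:
every branch is realized by some `h ∈ H` up to `< ε·ℓ` mistakes. -/
def ApproxShatters {X : Type*} (H : Set (X → Bool)) (ε : ℝ) (ℓ : ℕ) : Prop :=
  ∃ t : List Bool → X, ∀ y : List Bool, y.length = ℓ → ∃ h ∈ H,
    ((Finset.univ.filter fun i : Fin y.length =>
        h (t (y.take i)) ≠ y.get i).card : ℝ) < ε * ℓ

/-! Binary search turns a threshold configuration of size `2 ^ n` into a mistake tree of depth `n`.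
Conversely, a hypothesis colours the labels of a deep tree by its values, and a deep monochromatic
subtree (Ramsey) yields the next step of a half-graph.

A virtual or approximate tree of depth `n` gives a tree labelled by finite sets such that on every
branch the mistake rates of some hypothesis add up to at most `ε * n`. If each mistake is discounted
by a factor `β`, then, by Bernoulli's inequality, such a branch has weight at least `β ^ (ε * n)`,
while the `2 ^ n` branches have total weight at most `(n + 1) ^ d * (1 + β) ^ n` if `H` shatters no
tree of depth `d`. For `ε < 1 / 2` and a suitable `β` this bounds an exponential in `n` by a
polynomial, so `n` is bounded.

The majority opinions make `H` a hypothesis class on its virtual elements, so the equivalence of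
trees and thresholds also bounds the virtual thresholds. -/

section Trees

variable {X : Type*} {P A B : Set X} {H H' : Set (X → Bool)} {c : Bool} {m n : ℕ}

/-- `ShattersOn P n H`: the class `H` shatters a complete mistake tree of depth `n` all of whose
labels lie in `P`, by recursion on the root. Unlike `Shatters`, depth `0` only asks `H` to be
nonempty, even if `X` is empty. -/
def ShattersOn (P : Set X) : ℕ → Set (X → Bool) → Prop
  | 0, H => H.Nonempty
  | n + 1, H => ∃ x ∈ P, ∀ b : Bool, ShattersOn P n {h ∈ H | h x = b}

namespace ShattersOn

theorem mono : ∀ {n : ℕ} {H H' : Set (X → Bool)}, H ⊆ H' → ShattersOn P n H → ShattersOn P n H'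
  | 0, _, _, hH, hs => Set.Nonempty.mono hH hs
  | _ + 1, _, _, hH, ⟨x, hx, hs⟩ => ⟨x, hx, fun b => (hs b).mono fun _ hh => ⟨hH hh.1, hh.2⟩⟩

theorem nonempty : ∀ {n : ℕ} {H : Set (X → Bool)}, ShattersOn P n H → H.Nonempty
  | 0, _, hs => hs
  | _ + 1, _, ⟨_, _, hs⟩ => (hs true).nonempty.mono fun _ hh => hh.1

theorem of_le : ∀ {m n : ℕ} {H : Set (X → Bool)}, m ≤ n → ShattersOn P n H → ShattersOn P m H
  | 0, _, _, _, hs => hs.nonempty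
  | _ + 1, _ + 1, _, hmn, ⟨x, hx, hs⟩ => ⟨x, hx, fun b => (hs b).of_le (Nat.le_of_succ_le_succ hmn)⟩

end ShattersOn

theorem realizes_cons (t : List Bool → X) (h : X → Bool) (b : Bool) (y : List Bool) :
    Realizes t h (b :: y) ↔ h (t []) = b ∧ Realizes (fun s => t (b :: s)) h y :=
  Fin.forall_fin_succ

theorem Shatters.shattersOn_univ : ∀ {n : ℕ} {H : Set (X → Bool)},
    Shatters H n → ShattersOn Set.univ n H
  | 0, _, ⟨_, ht⟩ => let ⟨h, hh, _⟩ := ht [] rfl; ⟨h, hh⟩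
  | n + 1, H, ⟨t, ht⟩ => by
    refine ⟨t [], trivial, fun b => Shatters.shattersOn_univ ⟨fun s => t (b :: s), fun y hy => ?_⟩⟩
    obtain ⟨h, hh, hr⟩ := ht (b :: y) (congrArg Nat.succ hy)
    obtain ⟨hroot, hrest⟩ := (realizes_cons t h b y).1 hr
    exact ⟨h, ⟨hh, hroot⟩, hrest⟩

theorem ShattersOn.shatters [Nonempty X] : ∀ {n : ℕ} {H : Set (X → Bool)},
    ShattersOn P n H → Shatters H n
  | 0, _, ⟨h, hh⟩ => by
    refine ⟨fun _ => Classical.arbitrary X, fun y hy => ⟨h, hh, ?_⟩⟩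
    obtain rfl := List.length_eq_zero_iff.1 hy
    exact fun i => i.elim0
  | n + 1, H, ⟨x, _, hs⟩ => by
    choose t ht using fun b => (hs b).shatters
    let graft : List Bool → X
      | [] => x
      | b :: s => t b s
    refine ⟨graft, fun y hy => ?_⟩
    obtain ⟨b, y, rfl⟩ := List.exists_cons_of_length_eq_add_one hy
    obtain ⟨h, hh, hr⟩ := ht b y (Nat.succ.inj hy)
    exact ⟨h, hh.1, (realizes_cons _ _ _ _).2 ⟨hh.2, hr⟩⟩

theorem bddAbove_shatters_iff_exists_not_shattersOn :
    BddAbove {n | Shatters H n} ↔ ∃ d, ¬ ShattersOn Set.univ d H := by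
  constructor
  · rintro ⟨k, hk⟩
    refine ⟨k + 1, fun hs => ?_⟩
    have : Nonempty X := let ⟨x, _⟩ := hs; ⟨x⟩
    exact k.not_succ_le_self (hk hs.shatters)
  · rintro ⟨d, hd⟩
    exact ⟨d, fun n hn => not_lt.1 fun hdn => hd (hn.shattersOn_univ.of_le hdn.le)⟩

theorem ldim_ne_top_iff : Ldim H ≠ ⊤ ↔ BddAbove {n | Shatters H n} := by
  rw [← not_iff_not, not_not, not_bddAbove_iff]
  constructor
  · intro htop k
    have hlt : ((k : ℕ∞) : WithBot ℕ∞) < Ldim H :=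
      htop ▸ WithBot.coe_lt_coe.2 (ENat.natCast_lt_top k)
    obtain ⟨_, ⟨n, hn, rfl⟩, hkn⟩ := lt_sSup_iff.1 hlt
    exact ⟨n, hn, by exact_mod_cast hkn⟩
  · intro hunb
    refine sSup_eq_top.2 fun b hb => ?_
    obtain ⟨k, hbk⟩ : ∃ k : ℕ, b ≤ ((k : ℕ∞) : WithBot ℕ∞) := by
      induction b with
      | bot => exact ⟨0, bot_le⟩
      | coe b =>
        lift b to ℕ using fun hb' => hb.ne (congrArg _ hb')
        exact ⟨b, le_rfl⟩
    obtain ⟨n, hn, hkn⟩ := hunb k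
    exact ⟨_, ⟨n, hn, rfl⟩, hbk.trans_lt (by exact_mod_cast hkn)⟩

theorem ThresholdAt.of_le (hmn : m ≤ n) : ThresholdAt H n → ThresholdAt H m
  | ⟨x, h, hh, hxh⟩ => ⟨x ∘ Fin.castLE hmn, h ∘ Fin.castLE hmn, fun _ => hh _, fun _ _ => hxh _ _⟩

theorem ThresholdAt.exists_split (hm : 0 < m) (hT : ThresholdAt H (m + n)) :
    ∃ x, ThresholdAt {h ∈ H | h x = false} m ∧ ThresholdAt {h ∈ H | h x = true} n := by
  obtain ⟨x, h, hh, hxh⟩ := hT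
  refine ⟨x (Fin.castAdd n ⟨m - 1, by omega⟩),
    ⟨x ∘ Fin.castAdd n, h ∘ Fin.castAdd n, fun j => ⟨hh _, ?_⟩, fun i j => hxh _ _⟩,
    ⟨x ∘ Fin.natAdd m, h ∘ Fin.natAdd m, fun j => ⟨hh _, (hxh _ _).2 ?_⟩, fun i j => ?_⟩⟩
  · rw [← Bool.not_eq_true, Function.comp_apply, hxh, Fin.lt_def]
    simp only [Fin.val_castAdd]
    omega
  · simp only [Fin.lt_def, Fin.val_castAdd, Fin.val_natAdd]
    omega
  · exact (hxh _ _).trans (by simp)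

theorem ThresholdAt.shattersOn_univ : ∀ {n : ℕ} {H : Set (X → Bool)},
    ThresholdAt H (2 ^ n) → ShattersOn Set.univ n H
  | 0, _, ⟨_, h, hh, _⟩ => ⟨h 0, hh 0⟩
  | n + 1, H, hT => by
    rw [pow_succ, mul_two] at hT
    obtain ⟨x, hfalse, htrue⟩ := hT.exists_split (by positivity)
    exact ⟨x, trivial, Bool.rec hfalse.shattersOn_univ htrue.shattersOn_univ⟩

theorem ShattersOn.ramsey (hP : P ⊆ A ∪ B) : ∀ {n a b : ℕ} {H : Set (X → Bool)},
    n + 1 = a + b → ShattersOn P n H → ShattersOn A a H ∨ ShattersOn B b H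
  | _, 0, _, _, _, hs => Or.inl hs.nonempty
  | _, _ + 1, 0, _, _, hs => Or.inr hs.nonempty
  | 0, a + 1, b + 1, _, hn, _ => by omega
  | n + 1, a + 1, b + 1, H, hn, ⟨x, hx, hs⟩ => by
    rcases hP hx with hA | hB
    · by_cases hc : ∃ c, ShattersOn B (b + 1) {h ∈ H | h x = c}
      · obtain ⟨c, hc⟩ := hc
        exact Or.inr (hc.mono fun _ hh => hh.1)
      · push Not at hc
        exact Or.inl ⟨x, hA, fun c => (ramsey hP (by omega) (hs c)).resolve_right (hc c)⟩
    · by_cases hc : ∃ c, ShattersOn A (a + 1) {h ∈ H | h x = c}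
      · obtain ⟨c, hc⟩ := hc
        exact Or.inl (hc.mono fun _ hh => hh.1)
      · push Not at hc
        exact Or.inr ⟨x, hB, fun c => (ramsey hP (by omega) (hs c)).resolve_left (hc c)⟩

/-- A half-graph of size `n` between points of `P` and members of `H`, taking the value `c` on and
below the diagonal. For `c = false` this is `ThresholdAt`; for `c = true` it is a threshold
configuration read backwards. -/
def HalfGraph (c : Bool) (n : ℕ) (P : Set X) (H : Set (X → Bool)) : Prop :=
  ∃ (x : Fin n → X) (h : Fin n → X → Bool),
    (∀ i, x i ∈ P) ∧ (∀ j, h j ∈ H) ∧ ∀ i j, h j (x i) = c ↔ j ≤ i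

namespace HalfGraph

theorem zero : HalfGraph c 0 P H :=
  ⟨Fin.elim0, Fin.elim0, fun i => i.elim0, fun i => i.elim0, fun i => i.elim0⟩

theorem mono (hP : A ⊆ B) (hH : H ⊆ H') : HalfGraph c n A H → HalfGraph c n B H'
  | ⟨x, h, hx, hh, hxh⟩ => ⟨x, h, fun i => hP (hx i), fun j => hH (hh j), hxh⟩

theorem cons {x : X} {h : X → Bool} (hx : x ∈ P) (hh : h ∈ H) (hhx : h x = c) :
    HalfGraph c n {z ∈ P | h z = c} {h' ∈ H | h' x = !c} → HalfGraph c (n + 1) P H := by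
  rintro ⟨x', h', hx', hh', hxh'⟩
  refine ⟨Fin.cons x x', Fin.cons h h', Fin.cases hx fun i => (hx' i).1,
    Fin.cases hh fun j => (hh' j).1,
    Fin.cases (Fin.cases ?_ fun j => ?_) fun i => Fin.cases ?_ fun j => ?_⟩
  · simpa using hhx
  · simp [(hh' j).2]
  · simp [(hx' i).2]
  · simpa using hxh' i j

theorem thresholdAt_of_false (hG : HalfGraph false n P H) : ThresholdAt H n := by
  obtain ⟨x, h, -, hh, hxh⟩ := hG
  exact ⟨x, h, hh, fun i j => by rw [← Bool.not_eq_false, hxh, not_le]⟩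

theorem thresholdAt_of_true (hG : HalfGraph true (n + 1) P H) : ThresholdAt H n := by
  obtain ⟨x, h, -, hh, hxh⟩ := hG
  refine ⟨fun i => x i.succ.rev, fun j => h j.castSucc.rev, fun j => hh _, fun i j => ?_⟩
  rw [hxh, Fin.rev_le_rev, Fin.succ_le_castSucc_iff]

end HalfGraph

-- Any `h ∈ H` colours the labels by its values; the root of a tree that is monochromatic for this
-- colouring, together with `h`, is the next step of the half-graph.
theorem ShattersOn.halfGraph : ∀ (p q : ℕ) {d : ℕ} {P : Set X} {H : Set (X → Bool)},
    d + 1 = 2 ^ (p + q) → ShattersOn P d H → HalfGraph false p P H ∨ HalfGraph true q P H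
  | 0, _, _, _, _, _, _ => Or.inl .zero
  | _ + 1, 0, _, _, _, _, _ => Or.inr .zero
  | p + 1, q + 1, d, P, H, hd, hs => by
    obtain ⟨h, hh⟩ := hs.nonempty
    have hcolour : P ⊆ {z ∈ P | h z = false} ∪ {z ∈ P | h z = true} := fun z hz =>
      (Bool.eq_false_or_eq_true (h z)).symm.imp (⟨hz, ·⟩) (⟨hz, ·⟩)
    obtain ⟨e, he⟩ : ∃ e, e + 1 = 2 ^ (p + q + 1) := ⟨_, Nat.sub_add_cancel Nat.one_le_two_pow⟩
    have hde : d + 1 = (e + 1) + (e + 1) := by rw [hd, he]; ring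
    rcases hs.ramsey hcolour hde with ⟨x, hx, hsub⟩ | ⟨x, hx, hsub⟩
    · exact (halfGraph p (q + 1) he (hsub true)).imp (.cons hx.1 hh hx.2)
        (.mono (Set.sep_subset ..) (Set.sep_subset ..))
    · exact (halfGraph (p + 1) q (by rw [he]; ring) (hsub false)).imp
        (.mono (Set.sep_subset ..) (Set.sep_subset ..)) (.cons hx.1 hh hx.2)
termination_by p q => p + q

theorem ShattersOn.thresholdAt (hs : ShattersOn P (2 ^ (n + (n + 1)) - 1) H) : ThresholdAt H n :=
  (ShattersOn.halfGraph n (n + 1) (Nat.sub_add_cancel Nat.one_le_two_pow) hs).elim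
    HalfGraph.thresholdAt_of_false HalfGraph.thresholdAt_of_true

theorem bddAbove_thresholdAt_iff_bddAbove_shatters :
    BddAbove {n | ThresholdAt H n} ↔ BddAbove {n | Shatters H n} := by
  rw [bddAbove_shatters_iff_exists_not_shattersOn]
  constructor
  · rintro ⟨k, hk⟩
    exact ⟨_, fun hs => k.not_succ_le_self (hk hs.thresholdAt)⟩
  · rintro ⟨d, hd⟩
    exact ⟨2 ^ d, fun n hn => not_lt.1 fun hdn => hd (hn.of_le hdn.le).shattersOn_univ⟩

end Trees

section Averages

open Finset
open scoped BigOperators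

variable {X : Type*} {H : Set (X → Bool)} {β ε : ℝ} {B : Finset X} {h : X → Bool} {c : Bool}
  {T : List Bool → Finset X} {n d : ℕ}

/-- The weight that a prediction `b` receives when the outcome is `c`: every mistake is discounted
by the factor `β`. -/
noncomputable def discount (β : ℝ) (b c : Bool) : ℝ := if b = c then 1 else β

/-- The proportion of points of `B` at which `h` differs from `c`, with value `0` if `B` is
empty. -/
noncomputable def mistakeRate (B : Finset X) (h : X → Bool) (c : Bool) : ℝ :=
  𝔼 x ∈ B, if h x = c then 0 else 1

/-- The weight of `h` along the branch `y` of a tree `T` labelled by finite sets: the product over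
the nodes of the average discounts. -/
noncomputable def branchWeight (β : ℝ) (T : List Bool → Finset X) (h : X → Bool)
    (y : List Bool) : ℝ :=
  ∏ i : Fin y.length, 𝔼 x ∈ T (y.take i), discount β (h x) (y.get i)

/-- A common weakening of `VirtShatters` and `ApproxShatters`: on every branch of some tree of depth
`n` labelled by finite nonempty sets, the mistake rates of some `h ∈ H` sum to at most `ε * n`. -/
def AvgShatters (H : Set (X → Bool)) (ε : ℝ) (n : ℕ) : Prop :=
  ∃ T : List Bool → Finset X, (∀ s, s.length < n → (T s).Nonempty) ∧
    ∀ y : List Bool, y.length = n → ∃ h ∈ H,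
      ∑ i : Fin y.length, mistakeRate (T (y.take i)) h (y.get i) ≤ ε * n

theorem discount_nonneg (hβ : 0 ≤ β) (b c : Bool) : 0 ≤ discount β b c := by
  unfold discount
  split_ifs <;> positivity

theorem sum_discount (β : ℝ) (b : Bool) : ∑ c, discount β b c = 1 + β := by
  cases b <;> simp [discount, add_comm]

theorem sum_discount_mul_le (hβ : 0 ≤ β) (b : Bool) {f : Bool → ℝ} {r : ℝ} (hf : ∀ c, f c ≤ r) :
    ∑ c, discount β b c * f c ≤ (1 + β) * r := by
  rw [← sum_discount β b, sum_mul]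
  exact sum_le_sum fun c _ => mul_le_mul_of_nonneg_left (hf c) (discount_nonneg hβ b c)

theorem branchWeight_cons (β : ℝ) (T : List Bool → Finset X) (h : X → Bool) (c : Bool)
    (y : List Bool) :
    branchWeight β T h (c :: y) =
      (𝔼 x ∈ T [], discount β (h x) c) * branchWeight β (fun s => T (c :: s)) h y :=
  Fin.prod_univ_succ _

theorem sum_eq_sum_sum_preimage_cons {α M : Type*} [Fintype α] [AddCommMonoid M]
    {S : Finset (List α)} (hS : [] ∉ S) (f : List α → M) :
    ∑ y ∈ S, f y =
      ∑ a, ∑ y ∈ S.preimage (List.cons a) List.cons_injective.injOn, f (a :: y) := by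
  simp_rw [sum_preimage', sum_filter]
  rw [sum_comm]
  refine sum_congr rfl fun y hy => ?_
  obtain ⟨a, y, rfl⟩ := List.exists_cons_of_ne_nil (ne_of_mem_of_not_mem hy hS)
  simp

theorem sum_branchWeight_eq_expect {S : Finset (List Bool)} (hS : [] ∉ S)
    (g : List Bool → X → Bool) :
    ∑ y ∈ S, branchWeight β T (g y) y =
      𝔼 x ∈ T [], ∑ b, ∑ c, discount β b c *
        ∑ y ∈ S.preimage (List.cons c) List.cons_injective.injOn with g (c :: y) x = b,
          branchWeight β (fun s => T (c :: s)) (g (c :: y)) y := by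
  have hfibre (c : Bool) (x : X) (R : Finset (List Bool)) :
      ∑ b, discount β b c * ∑ y ∈ R with g (c :: y) x = b,
          branchWeight β (fun s => T (c :: s)) (g (c :: y)) y =
        ∑ y ∈ R, discount β (g (c :: y) x) c *
          branchWeight β (fun s => T (c :: s)) (g (c :: y)) y := by
    rw [← sum_fiberwise R fun y => g (c :: y) x]
    refine sum_congr rfl fun b _ => ?_
    rw [mul_sum]
    exact sum_congr rfl fun y hy => by rw [(mem_filter.1 hy).2]
  simp_rw [sum_eq_sum_sum_preimage_cons hS, branchWeight_cons, expect_mul, ← expect_sum_comm]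
  refine expect_congr rfl fun x _ => ?_
  rw [sum_comm]
  exact sum_congr rfl fun c _ => (hfibre c x _).symm

theorem pow_succ_add_pow_le_add_one_pow_succ {a : ℝ} (ha : 0 ≤ a) (d : ℕ) :
    a ^ (d + 1) + a ^ d ≤ (a + 1) ^ (d + 1) :=
  calc a ^ (d + 1) + a ^ d = a ^ d * (a + 1) := by ring
    _ ≤ (a + 1) ^ d * (a + 1) := by gcongr; exact le_add_of_nonneg_right zero_le_one
    _ = (a + 1) ^ (d + 1) := (pow_succ _ _).symm

-- A label `x` at the root splits `H` into two classes, one of them of smaller depth, and the two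
-- outcomes `c` together charge either class the factor `1 + β`.
theorem sum_branchWeight_le (hβ : 0 ≤ β) : ∀ {n d : ℕ} {H : Set (X → Bool)}
    {T : List Bool → Finset X} {S : Finset (List Bool)} {g : List Bool → X → Bool},
    ¬ ShattersOn Set.univ d H → (∀ y ∈ S, y.length = n ∧ g y ∈ H) →
      ∑ y ∈ S, branchWeight β T (g y) y ≤ ((n : ℝ) + 1) ^ d * (1 + β) ^ n
  | 0, d, H, T, S, g, _, hS => by
    have hS' : S ⊆ {[]} := fun y hy => mem_singleton.2 (List.length_eq_zero_iff.1 (hS y hy).1)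
    rcases subset_singleton_iff.1 hS' with rfl | rfl <;> simp [branchWeight]
  | n + 1, 0, H, T, S, g, hd, hS => by
    obtain rfl : S = ∅ := eq_empty_of_forall_notMem fun y hy => hd ⟨g y, (hS y hy).2⟩
    simp only [sum_empty]
    positivity
  | n + 1, d + 1, H, T, S, g, hd, hS => by
    have hnil : [] ∉ S := fun h => Nat.zero_ne_add_one n (hS _ h).1
    have hside {e : ℕ} {x : X} {b : Bool} (he : ¬ ShattersOn Set.univ e {h ∈ H | h x = b}) :
        ∑ c, discount β b c *
          ∑ y ∈ S.preimage (List.cons c) List.cons_injective.injOn with g (c :: y) x = b,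
            branchWeight β (fun s => T (c :: s)) (g (c :: y)) y ≤
              (1 + β) * (((n : ℝ) + 1) ^ e * (1 + β) ^ n) :=
      sum_discount_mul_le hβ b fun c => sum_branchWeight_le hβ he fun y hy => by
        obtain ⟨hyS, hyb⟩ := mem_filter.1 hy
        obtain ⟨hlen, hmem⟩ := hS _ (mem_preimage.1 hyS)
        exact ⟨Nat.succ.inj hlen, hmem, hyb⟩
    rw [sum_branchWeight_eq_expect hnil]
    rcases (T []).eq_empty_or_nonempty with hT | hT
    · rw [hT, expect_empty]
      positivity
    refine expect_le hT fun x _ => ?_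
    obtain ⟨b, hsmall⟩ : ∃ b, ¬ ShattersOn Set.univ d {h ∈ H | h x = b} := by
      by_contra! hall
      exact hd ⟨x, trivial, hall⟩
    have hbig : ¬ ShattersOn Set.univ (d + 1) {h ∈ H | h x = !b} := fun hb =>
      hd (hb.mono fun _ hh => hh.1)
    rw [Fintype.sum_eq_add b (!b) (Bool.not_ne_self b).symm (by cases b <;> simp)]
    calc _ ≤ (1 + β) * (((n : ℝ) + 1) ^ d * (1 + β) ^ n) +
          (1 + β) * (((n : ℝ) + 1) ^ (d + 1) * (1 + β) ^ n) :=
        add_le_add (hside hsmall) (hside hbig)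
      _ = (((n : ℝ) + 1) ^ (d + 1) + ((n : ℝ) + 1) ^ d) * (1 + β) ^ (n + 1) := by ring
      _ ≤ (((n + 1 : ℕ) : ℝ) + 1) ^ (d + 1) * (1 + β) ^ (n + 1) := by
        rw [Nat.cast_succ]
        gcongr
        exact pow_succ_add_pow_le_add_one_pow_succ (by positivity) d

theorem rpow_mistakeRate_le (hβ : 0 ≤ β) (hB : B.Nonempty) :
    β ^ mistakeRate B h c ≤ 𝔼 x ∈ B, discount β (h x) c := by
  have hdiscount (x : X) : discount β (h x) c = 1 + (if h x = c then 0 else 1) * (β - 1) := by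
    unfold discount
    split_ifs <;> ring
  have hrate0 : 0 ≤ mistakeRate B h c := expect_nonneg fun x _ => by split_ifs <;> simp
  have hrate1 : mistakeRate B h c ≤ 1 := expect_le hB fun x _ => by split_ifs <;> simp
  calc β ^ mistakeRate B h c = (1 + (β - 1)) ^ mistakeRate B h c := by rw [add_sub_cancel]
    _ ≤ 1 + mistakeRate B h c * (β - 1) :=
        rpow_one_add_le_one_add_mul_self (by linarith) hrate0 hrate1
    _ = 𝔼 x ∈ B, discount β (h x) c := by
        simp_rw [hdiscount]
        rw [expect_add_distrib, expect_const hB, ← expect_mul, mistakeRate]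

theorem rpow_le_branchWeight (hβ0 : 0 < β) (hβ1 : β ≤ 1) {y : List Bool} {r : ℝ}
    (hT : ∀ s, s.length < y.length → (T s).Nonempty)
    (hr : ∑ i : Fin y.length, mistakeRate (T (y.take i)) h (y.get i) ≤ r) :
    β ^ r ≤ branchWeight β T h y :=
  calc β ^ r ≤ β ^ ∑ i : Fin y.length, mistakeRate (T (y.take i)) h (y.get i) :=
        Real.rpow_le_rpow_of_exponent_ge hβ0 hβ1 hr
    _ = ∏ i : Fin y.length, β ^ mistakeRate (T (y.take i)) h (y.get i) :=
        Real.rpow_sum_of_pos hβ0 _ _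
    _ ≤ branchWeight β T h y :=
        prod_le_prod (fun _ _ => by positivity) fun i _ =>
          rpow_mistakeRate_le hβ0.le (hT _ (by simp))

theorem AvgShatters.two_pow_mul_rpow_le (hβ0 : 0 < β) (hβ1 : β ≤ 1)
    (hd : ¬ ShattersOn Set.univ d H) (hA : AvgShatters H ε n) :
    2 ^ n * β ^ (ε * n) ≤ ((n : ℝ) + 1) ^ d * (1 + β) ^ n := by
  obtain ⟨T, hT, hbranch⟩ := hA
  choose! g hgH hgr using hbranch
  let branches : Finset (List Bool) := univ.image (List.Vector.toList (n := n))
  have hlen : ∀ y ∈ branches, y.length = n := fun y hy => by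
    obtain ⟨v, -, rfl⟩ := mem_image.1 hy
    exact v.toList_length
  have hcard : #branches = 2 ^ n := by
    rw [card_image_of_injective _ List.Vector.toList_injective, card_univ, card_vector,
      Fintype.card_bool]
  calc 2 ^ n * β ^ (ε * n) = ∑ _y ∈ branches, β ^ (ε * n) := by simp [hcard]
    _ ≤ ∑ y ∈ branches, branchWeight β T (g y) y := sum_le_sum fun y hy =>
        rpow_le_branchWeight hβ0 hβ1 (by rwa [hlen y hy]) (hgr y (hlen y hy))
    _ ≤ ((n : ℝ) + 1) ^ d * (1 + β) ^ n :=
        sum_branchWeight_le hβ0.le hd fun y hy => ⟨hlen y hy, hgH y (hlen y hy)⟩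

theorem one_add_exp_neg_two_mul_le (x : ℝ) :
    1 + Real.exp (-2 * x) ≤ 2 * Real.exp (-x + x ^ 2 / 2) :=
  calc 1 + Real.exp (-2 * x) = 2 * (Real.exp (-x) * Real.cosh x) := by
        rw [Real.cosh_eq, mul_div_assoc', mul_div_cancel₀ _ two_ne_zero, mul_add,
          ← Real.exp_add, ← Real.exp_add, neg_add_cancel, Real.exp_zero]
        ring_nf
    _ ≤ 2 * Real.exp (-x + x ^ 2 / 2) := by
        rw [Real.exp_add]
        gcongr
        exact Real.cosh_le_exp_half_sq x

-- The discount `β = exp (-2 * x)` with `x = 1 - 2 * ε` turns `1 + β` into `2 * exp (-x) * cosh x`.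
theorem AvgShatters.exp_pow_le (hε : ε ≤ 1 / 2) (hd : ¬ ShattersOn Set.univ d H)
    (hA : AvgShatters H ε n) : Real.exp ((1 - 2 * ε) ^ 2 / 2) ^ n ≤ ((n : ℝ) + 1) ^ d := by
  set x := 1 - 2 * ε with hx
  have hx0 : 0 ≤ x := by linarith only [hx, hε]
  have hdiscount : Real.exp (-2 * x) ^ (ε * n) = Real.exp (-x + x ^ 2) ^ n := by
    rw [← Real.exp_mul, ← Real.exp_nat_mul, show ε = (1 - x) / 2 by linarith only [hx]]
    ring_nf
  have hweights := hA.two_pow_mul_rpow_le (Real.exp_pos (-2 * x))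
    (Real.exp_le_one_iff.2 (by linarith only [hx0])) hd
  refine le_of_mul_le_mul_right ?_ (show 0 < (2 * Real.exp (-x + x ^ 2 / 2)) ^ n by positivity)
  calc Real.exp (x ^ 2 / 2) ^ n * (2 * Real.exp (-x + x ^ 2 / 2)) ^ n
      = 2 ^ n * Real.exp (-2 * x) ^ (ε * n) := by
        rw [hdiscount, ← mul_pow, ← mul_pow, mul_left_comm, ← Real.exp_add]
        ring_nf
    _ ≤ ((n : ℝ) + 1) ^ d * (1 + Real.exp (-2 * x)) ^ n := hweights
    _ ≤ ((n : ℝ) + 1) ^ d * (2 * Real.exp (-x + x ^ 2 / 2)) ^ n := by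
        gcongr
        exact one_add_exp_neg_two_mul_le x

theorem bddAbove_pow_le_add_one_pow {r : ℝ} (hr : 1 < r) (d : ℕ) :
    BddAbove {n : ℕ | r ^ n ≤ ((n : ℝ) + 1) ^ d} := by
  have hr0 : 0 < r := one_pos.trans hr
  have hlim := (tendsto_pow_const_div_const_pow_of_one_lt d hr).comp
    (Filter.tendsto_add_atTop_nat 1)
  obtain ⟨k, hk⟩ := Filter.eventually_atTop.1 (hlim.eventually_lt_const (inv_pos.2 hr0))
  refine ⟨k, fun n (hn : r ^ n ≤ _) => not_lt.1 fun hkn => hn.not_gt ?_⟩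
  have hlt := hk n hkn.le
  simp only [Function.comp_apply, Nat.cast_add, Nat.cast_one] at hlt
  rwa [pow_succ r, ← div_div, div_eq_mul_inv _ r, mul_lt_iff_lt_one_left (inv_pos.2 hr0),
    div_lt_one (by positivity)] at hlt

theorem bddAbove_avgShatters (hε : ε < 1 / 2) (hH : BddAbove {n | Shatters H n}) :
    BddAbove {n | AvgShatters H ε n} := by
  obtain ⟨d, hd⟩ := bddAbove_shatters_iff_exists_not_shattersOn.1 hH
  have hrate : 0 < (1 - 2 * ε) ^ 2 / 2 := by
    have : 0 < 1 - 2 * ε := by linarith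
    positivity
  exact (bddAbove_pow_le_add_one_pow (Real.one_lt_exp_iff.2 hrate) d).mono fun _ hA =>
    hA.exp_pow_le hε.le hd

theorem mistakeRate_le_of_tb_eq (hB : EpsGoodX H ε B) (hh : h ∈ H) (hc : tb ε h B = c) :
    mistakeRate B h c ≤ ε := by
  have hcard : (#{x ∈ B | h x = !c} : ℝ) < ε * #B := by
    cases c
    · rw [tb, ite_eq_right_iff] at hc
      exact (hB h hh).resolve_right fun hlt => Bool.noConfusion (hc hlt)
    · rw [tb, ite_eq_left_iff] at hc
      exact not_imp_comm.1 hc Bool.false_ne_true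
  have hne (x : X) : h x = (!c) ↔ ¬ h x = c := Bool.eq_not
  have hrate : mistakeRate B h c = #{x ∈ B | h x = !c} / #B := by
    simp [mistakeRate, expect_eq_sum_div_card, sum_ite, hne]
  have hpos : 0 < (#B : ℝ) := by
    refine Nat.cast_pos.2 (Nat.pos_of_ne_zero fun hB0 => hcard.not_ge ?_)
    simp [hB0]
  rw [hrate]
  exact ((div_lt_iff₀ hpos).2 hcard).le

theorem VirtShatters.avgShatters : VirtShatters H ε n → AvgShatters H ε n := by
  rintro ⟨T, hT, hbranch⟩
  refine ⟨T, fun s hs => (hT s hs).1, fun y hy => ?_⟩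
  obtain ⟨h, hh, hr⟩ := hbranch y hy
  refine ⟨h, hh, ?_⟩
  calc ∑ i : Fin y.length, mistakeRate (T (y.take i)) h (y.get i)
      ≤ ∑ _i : Fin y.length, ε := sum_le_sum fun i _ =>
        mistakeRate_le_of_tb_eq (hT _ (by simp [← hy])).2 hh (hr i)
    _ = ε * n := by simp [hy, mul_comm]

theorem ApproxShatters.avgShatters : ApproxShatters H ε n → AvgShatters H ε n := by
  rintro ⟨t, ht⟩
  refine ⟨fun s => {t s}, fun s _ => singleton_nonempty _, fun y hy => ?_⟩
  obtain ⟨h, hh, hr⟩ := ht y hy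
  refine ⟨h, hh, hr.le.trans' ?_⟩
  simp [mistakeRate, sum_ite]

end Averages

section Virtual

variable {X : Type*} {H : Set (X → Bool)} {ε : ℝ} {n : ℕ}

theorem epsGoodX_singleton (H : Set (X → Bool)) (hε : 0 < ε) (x : X) : EpsGoodX H ε {x} := by
  intro h _
  cases hx : h x <;> simp [Finset.filter_singleton, hx, hε]

theorem tb_singleton (hε0 : 0 < ε) (hε1 : ε ≤ 1) (h : X → Bool) (x : X) : tb ε h {x} = h x := by
  cases hx : h x <;> simp [tb, Finset.filter_singleton, hx, hε0, hε1]

/-- The virtual elements of the hypothesis class `H`. -/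
abbrev VirtualElement (H : Set (X → Bool)) (ε : ℝ) : Type _ :=
  {B : Finset X // B.Nonempty ∧ EpsGoodX H ε B}

/-- The class `H` acting on its virtual elements by majority opinion. -/
def virtualClass (H : Set (X → Bool)) (ε : ℝ) : Set (VirtualElement H ε → Bool) :=
  (fun h B => tb ε h B.1) '' H

theorem Shatters.virtShatters_of_virtualClass :
    Shatters (virtualClass H ε) n → VirtShatters H ε n := by
  rintro ⟨t, ht⟩
  refine ⟨fun s => (t s).1, fun s _ => (t s).2, fun y hy => ?_⟩
  obtain ⟨_, ⟨h, hh, rfl⟩, hr⟩ := ht y hy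
  exact ⟨h, hh, hr⟩

theorem VirtThresholdAt.thresholdAt_virtualClass :
    VirtThresholdAt H ε n → ThresholdAt (virtualClass H ε) n
  | ⟨B, h, _, _, hB, hh, hBh⟩ =>
    ⟨fun i => ⟨B i, hB i⟩, fun j B => tb ε (h j) B.1, fun j => ⟨h j, hh j, rfl⟩, hBh⟩

theorem bddAbove_virtThresholdAt (hV : BddAbove {n | VirtShatters H ε n}) :
    BddAbove {n | VirtThresholdAt H ε n} :=
  have hshatters : BddAbove {n | Shatters (virtualClass H ε) n} :=
    hV.mono fun _ => Shatters.virtShatters_of_virtualClass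
  (bddAbove_thresholdAt_iff_bddAbove_shatters.2 hshatters).mono fun _ =>
    VirtThresholdAt.thresholdAt_virtualClass

theorem injective_of_iff_lt {α β ι : Type*} [LinearOrder ι] {x : ι → α} {h : ι → β}
    {r : β → α → Prop} (hr : ∀ i j, r (h j) (x i) ↔ i < j) :
    Function.Injective x ∧ Function.Injective h := by
  constructor
  · refine Function.Injective.of_lt_imp_ne fun i j hij hx => ?_
    exact lt_irrefl j ((hr j j).1 (hx ▸ (hr i j).2 hij))
  · refine Function.Injective.of_lt_imp_ne fun i j hij hh => ?_
    exact lt_irrefl i ((hr i i).1 (hh ▸ (hr i j).2 hij))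

theorem ThresholdAt.virtThresholdAt (hε0 : 0 < ε) (hε1 : ε ≤ 1) :
    ThresholdAt H n → VirtThresholdAt H ε n := by
  rintro ⟨x, h, hh, hxh⟩
  obtain ⟨hx, hh'⟩ := injective_of_iff_lt (r := fun (f : X → Bool) x => f x = true) hxh
  refine ⟨fun i => {x i}, h, Finset.singleton_injective.comp hx, hh', fun i =>
    ⟨Finset.singleton_nonempty _, epsGoodX_singleton H hε0 _⟩, hh, fun i j => ?_⟩
  rw [tb_singleton hε0 hε1, hxh]

theorem Shatters.approxShatters (hε : 0 < ε) (hn : n ≠ 0) :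
    Shatters H n → ApproxShatters H ε n := by
  rintro ⟨t, ht⟩
  refine ⟨t, fun y hy => ?_⟩
  obtain ⟨h, hh, hr⟩ := ht y hy
  refine ⟨h, hh, ?_⟩
  rw [Finset.filter_false_of_mem fun i _ => not_not.2 (hr i), Finset.card_empty, Nat.cast_zero]
  positivity

end Virtual

/-- for fixed `0 < ε < 1/2`, finiteness of the Littlestone dimension, the
Threshold dimension, the ε-virtual Littlestone dimension, the ε-virtual Threshold
dimension, and the ε-approximate Littlestone dimension are all equivalent. -/
theorem stmt_10 {X : Type*} (H : Set (X → Bool)) (ε : ℝ) (hε0 : 0 < ε) (hε : ε < 1/2) :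
    List.TFAE [
      Ldim H ≠ ⊤,
      (∃ k : ℕ, ∀ m : ℕ, ThresholdAt H m → m ≤ k),
      (∃ k : ℕ, ∀ m : ℕ, VirtShatters H ε m → m ≤ k),
      (∃ k : ℕ, ∀ m : ℕ, VirtThresholdAt H ε m → m ≤ k),
      (∃ k : ℕ, ∀ m : ℕ, ApproxShatters H ε m → m ≤ k)
    ] := by
  change List.TFAE [Ldim H ≠ ⊤, BddAbove {n | ThresholdAt H n}, BddAbove {n | VirtShatters H ε n},
    BddAbove {n | VirtThresholdAt H ε n}, BddAbove {n | ApproxShatters H ε n}]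
  rw [ldim_ne_top_iff]
  tfae_have 2 ↔ 1 := bddAbove_thresholdAt_iff_bddAbove_shatters
  tfae_have 1 → 3 := fun hH =>
    (bddAbove_avgShatters hε hH).mono fun _ => VirtShatters.avgShatters
  tfae_have 3 → 4 := bddAbove_virtThresholdAt
  tfae_have 4 → 2 := fun hV =>
    hV.mono fun _ => ThresholdAt.virtThresholdAt hε0 (by linarith)
  tfae_have 1 → 5 := fun hH =>
    (bddAbove_avgShatters hε hH).mono fun _ => ApproxShatters.avgShatters
  tfae_have 5 → 1 := fun hA => (hA.insert 0).mono fun n hn =>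
    (eq_or_ne n 0).imp_right fun hn0 => Shatters.approxShatters hε0 hn0 hn
  tfae_finish
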